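/- (Theorem 3.4, trees) Let σ be a configuration on a finite tree G (a finite connected acyclic simple graph) and suppose a sequence of operations, each a happy swap chain or an unhappy swap with respect to the current configuration, transforms σ into the identity. Then the total number of swaps performed is at most L(σ); in particular, it is at most 2 times the minimum number of swaps along edges of G needed to sort σ. -/

import Mathlib

/-- An arc of the auxiliary digraph `F(σ)`: `(v, w)` is an arc when `{v, w}` is an edge of
`G` and the token on `v` gets strictly closer to its target by moving to `w`. -/
def TokenSwap.FArc {V : Type*} (G : SimpleGraph V) (σ : Equiv.Perm V) (v w : V) : Prop :=
  G.Adj v w ∧ G.dist w (σ v) < G.dist v (σ v)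

/-- The swap performed at time `j` (along the edge `e j`, in configuration `τ j`) is an
unhappy swap: `(e j).1 → (e j).2` is an arc of `F(τ j)` and the token on `(e j).2` is on
its target vertex. -/
def TokenSwap.UnhappyAt {V : Type*} (G : SimpleGraph V)
    (τ : ℕ → Equiv.Perm V) (e : ℕ → V × V) (j : ℕ) : Prop :=
  TokenSwap.FArc G (τ j) (e j).1 (e j).2 ∧ τ j (e j).2 = (e j).2

/-- The `m − 1` swaps performed at times `j, j+1, …, j+m-2` form a happy swap chain for the
configuration `τ j`: there is a directed cycle `v 0, …, v (m-1)` (`m ≥ 2`, pairwise distinct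
vertices) in `F(τ j)`, and the swaps are performed along its edges in the order
`(v (m-2), v (m-1)), …, (v 0, v 1)`, after which the token formerly on `v i` is on
`v (i+1 mod m)`. -/
def TokenSwap.HappyChainAt {V : Type*} (G : SimpleGraph V)
    (τ : ℕ → Equiv.Perm V) (e : ℕ → V × V) (j m : ℕ) : Prop :=
  2 ≤ m ∧ ∃ v : ℕ → V,
    (∀ a < m, ∀ b < m, v a = v b → a = b) ∧
    (∀ i < m, TokenSwap.FArc G (τ j) (v i) (v ((i + 1) % m))) ∧
    (∀ i < m - 1, e (j + i) = (v (m - 2 - i), v (m - 1 - i)))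

/-!
Call a token *displaced* if an unhappy swap has moved it off its target and no happy swap chain has
moved it since; it then sits next to its target. If every cycle of `G` has length at most `r + 1`,
the potential `2 r L(σ) - (r + 1) #displaced` pays `r + 1` for each swap:

* An unhappy swap does not increase `L`, and it displaces one more token.
* A happy swap chain on `m ≤ r + 1` vertices lowers `L` by at least `m`. The displaced tokens
  never chase each other around a closed cycle of targets: a newly displaced token points to a
  vertex which was solved just before. Hence at most `m - 1` of the tokens in the chain are
  displaced, and `2 r m - (r + 1) (m - 1) ≥ (r + 1) (m - 1)`.

On a tree `r = 1` is allowed, as every happy swap chain is a single swap. Finally, a swap changes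
`L` by at most two, which turns bounds in terms of `L` into approximation factors.
-/

open Finset Equiv.Perm

namespace TokenSwap

variable {V : Type*} {G : SimpleGraph V} {σ : Equiv.Perm V}

section Displaced

/-- A set `D` of vertices whose tokens may count as displaced by unhappy swaps: each of them is
next to its target, and `σ` maps no nonempty subset of `D` to itself, i.e. following targets
within `D` never closes up into a cycle. -/
structure IsDisplaced (G : SimpleGraph V) (σ : Equiv.Perm V) (D : Finset V) : Prop where
  adj : ∀ v ∈ D, G.Adj v (σ v)
  exists_notMem : ∀ S ⊆ D, S.Nonempty → ∃ v ∈ S, σ v ∉ S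

variable {D : Finset V}

lemma isDisplaced_empty : IsDisplaced G σ ∅ where
  adj := by simp
  exists_notMem S hS hne := absurd (subset_empty.mp hS) hne.ne_empty

lemma IsDisplaced.mono {D' : Finset V} (hD : IsDisplaced G σ D) (h : D' ⊆ D) :
    IsDisplaced G σ D' where
  adj v hv := hD.adj v (h hv)
  exists_notMem S hS := hD.exists_notMem S (hS.trans h)

lemma IsDisplaced.congr {σ' : Equiv.Perm V} (hD : IsDisplaced G σ D)
    (h : ∀ v ∈ D, σ' v = σ v) : IsDisplaced G σ' D where
  adj v hv := (h v hv).symm ▸ hD.adj v hv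
  exists_notMem S hS hne := by
    obtain ⟨v, hv, hσv⟩ := hD.exists_notMem S hS hne
    exact ⟨v, hv, (h v (hS hv)).symm ▸ hσv⟩

lemma IsDisplaced.insert_of_adj [DecidableEq V] {v : V} (hD : IsDisplaced G σ D)
    (hv : G.Adj v (σ v)) (hσv : σ v ∉ D) : IsDisplaced G σ (insert v D) where
  adj := by simpa [hv] using hD.adj
  exists_notMem S hS hne := by
    by_cases hvS : v ∈ S
    · exact ⟨v, hvS, fun h => (mem_insert.mp (hS h)).elim hv.ne' hσv⟩
    · exact hD.exists_notMem S ((subset_insert_iff_of_notMem hvS).mp hS) hne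

lemma IsDisplaced.apply_ne (hD : IsDisplaced G σ D) {v : V} (hv : v ∈ D) : σ v ≠ v :=
  (hD.adj v hv).ne'

lemma FArc.eq_apply_of_adj {v w : V} (h : FArc G σ v w) (hv : G.Adj v (σ v)) : w = σ v := by
  have hdist : G.dist w (σ v) < 1 := SimpleGraph.dist_eq_one_iff_adj.mpr hv ▸ h.2
  have hreach : G.Reachable w (σ v) := h.1.symm.reachable.trans hv.reachable
  exact hreach.dist_eq_zero_iff.mp (Nat.lt_one_iff.mp hdist)

lemma IsDisplaced.notMem_of_fArc {v w : V} (hD : IsDisplaced G σ D) (h : FArc G σ v w)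
    (hw : σ w = w) : v ∉ D := fun hv =>
  h.1.ne (σ.injective ((h.eq_apply_of_adj (hD.adj v hv)).symm.trans hw.symm))

lemma IsDisplaced.insert_mul_swap [DecidableEq V] {v w : V} (hD : IsDisplaced G σ D)
    (h : FArc G σ v w) (hw : σ w = w) :
    IsDisplaced G (σ * Equiv.swap v w) (insert v D) := by
  have hwD : w ∉ D := fun hwD => hD.apply_ne hwD hw
  have hvw : (σ * Equiv.swap v w) v = w := by simp [hw]
  refine (hD.congr fun x hx => ?_).insert_of_adj (by rw [hvw]; exact h.1) (by rwa [hvw])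
  rw [mul_apply, Equiv.swap_apply_of_ne_of_ne]
  · exact ne_of_mem_of_not_mem hx (hD.notMem_of_fArc h hw)
  · exact ne_of_mem_of_not_mem hx hwD

variable [Fintype V] [DecidableEq V] {c : Equiv.Perm V}

-- `σ * c⁻¹` is the configuration in which the token formerly on `v` is on `c v`.
lemma IsDisplaced.sdiff_support (hD : IsDisplaced G σ D) :
    IsDisplaced G (σ * c⁻¹) (D \ c.support) := by
  refine (hD.mono sdiff_subset).congr fun v hv => ?_
  have hcv : c v = v := notMem_support.mp (mem_sdiff.mp hv).2
  rw [mul_apply, inv_eq_iff_eq.mpr hcv.symm]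

lemma IsDisplaced.not_support_subset (hD : IsDisplaced G σ D) (hc : c ≠ 1)
    (harc : ∀ v ∈ c.support, FArc G σ v (c v)) : ¬c.support ⊆ D := by
  intro hsub
  obtain ⟨v, hv, hσv⟩ :=
    hD.exists_notMem _ hsub (nonempty_iff_ne_empty.mpr (support_eq_empty_iff.not.mpr hc))
  rw [← (harc v hv).eq_apply_of_adj (hD.adj v (hsub hv))] at hσv
  exact hσv (apply_mem_support.mpr hv)

lemma IsDisplaced.card_lt_card_sdiff_support_add (hD : IsDisplaced G σ D) (hc : c ≠ 1)
    (harc : ∀ v ∈ c.support, FArc G σ v (c v)) :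
    #D < #(D \ c.support) + #c.support := by
  have hlt : #(D ∩ c.support) < #c.support :=
    card_lt_card (inter_subset_right.ssubset_of_ne fun h =>
      hD.not_support_subset hc harc (inter_eq_right.mp h))
  have := card_sdiff_add_card_inter D c.support
  omega

end Displaced

section TotalDist

variable [Fintype V]

/-- The sum `L(σ)` of the distances of all tokens to their targets. -/
noncomputable def totalDist (G : SimpleGraph V) (σ : Equiv.Perm V) : ℕ := ∑ x, G.dist x (σ x)

lemma totalDist_one : totalDist G 1 = 0 := by simp [totalDist]

lemma totalDist_mul_inv (c : Equiv.Perm V) :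
    totalDist G (σ * c⁻¹) = ∑ x, G.dist (c x) (σ x) := by
  rw [totalDist, ← Equiv.sum_comp c]
  simp

variable [DecidableEq V]

lemma totalDist_mul_inv_add_card_support_le {c : Equiv.Perm V}
    (harc : ∀ v ∈ c.support, FArc G σ v (c v)) :
    totalDist G (σ * c⁻¹) + #c.support ≤ totalDist G σ := by
  calc totalDist G (σ * c⁻¹) + #c.support
      = ∑ x, (G.dist (c x) (σ x) + if x ∈ c.support then 1 else 0) := by
        simp [totalDist_mul_inv, sum_add_distrib, -mem_support]
    _ ≤ totalDist G σ := sum_le_sum fun x _ => by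
        split_ifs with hx
        · exact (harc x hx).2
        · rw [notMem_support.mp hx, add_zero]

lemma totalDist_mul_swap {v w : V} (h : v ≠ w) :
    totalDist G (σ * Equiv.swap v w) + (G.dist v (σ v) + G.dist w (σ w)) =
      totalDist G σ + (G.dist v (σ w) + G.dist w (σ v)) := by
  have hrest : ∑ x ∈ {v, w}ᶜ, G.dist x ((σ * Equiv.swap v w) x) =
      ∑ x ∈ {v, w}ᶜ, G.dist x (σ x) := sum_congr rfl fun x hx => by
    obtain ⟨hxv, hxw⟩ : x ≠ v ∧ x ≠ w := by simpa using hx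
    rw [mul_apply, Equiv.swap_apply_of_ne_of_ne hxv hxw]
  rw [totalDist, totalDist, ← sum_add_sum_compl {v, w}, hrest, sum_pair h,
    ← sum_add_sum_compl {v, w} fun x => G.dist x (σ x), sum_pair h]
  simp only [mul_apply, Equiv.swap_apply_left, Equiv.swap_apply_right]
  ring

lemma totalDist_mul_swap_le_of_fArc {v w : V} (h : FArc G σ v w) (hw : σ w = w) :
    totalDist G (σ * Equiv.swap v w) ≤ totalDist G σ := by
  have hswap := totalDist_mul_swap (G := G) (σ := σ) h.1.ne
  rw [hw, SimpleGraph.dist_self, SimpleGraph.dist_eq_one_iff_adj.mpr h.1] at hswap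
  have := h.2
  omega

lemma totalDist_mul_swap_le_add_two {v w : V} (h : G.Adj v w) :
    totalDist G (σ * Equiv.swap v w) ≤ totalDist G σ + 2 := by
  have hswap := totalDist_mul_swap (G := G) (σ := σ) h.ne
  have hv := h.reachable.dist_triangle_left (σ w)
  have hw := h.symm.reachable.dist_triangle_left (σ v)
  rw [SimpleGraph.dist_eq_one_iff_adj.mpr h] at hv
  rw [SimpleGraph.dist_eq_one_iff_adj.mpr h.symm] at hw
  omega

lemma totalDist_prod_swap_le (l : List (V × V)) (hl : ∀ p ∈ l, G.Adj p.1 p.2) :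
    totalDist G (l.map fun p => Equiv.swap p.1 p.2).prod ≤ 2 * l.length := by
  induction l using List.reverseRecOn with
  | nil => simp [totalDist_one]
  | append_singleton l p ih =>
    have ih := ih fun q hq => hl q (List.mem_append_left _ hq)
    have hp := totalDist_mul_swap_le_add_two
      (σ := (l.map fun p => Equiv.swap p.1 p.2).prod) (hl p (by simp))
    simp only [List.map_append, List.map_singleton, List.prod_append, List.prod_singleton,
      List.length_append, List.length_singleton]
    omega

end TotalDist

section Potential

variable [Fintype V] {r : ℕ} {D : Finset V}

/-- The potential `2 r L(σ) - (r + 1) |D|`, where `D` is the set of vertices currently holding a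
displaced token. -/
noncomputable def potential (r : ℕ) (G : SimpleGraph V) (σ : Equiv.Perm V) (D : Finset V) : ℤ :=
  2 * r * totalDist G σ - (r + 1) * #D

variable [DecidableEq V]

lemma IsDisplaced.potential_mul_swap_add_le {v w : V} (hD : IsDisplaced G σ D)
    (h : FArc G σ v w) (hw : σ w = w) :
    potential r G (σ * Equiv.swap v w) (insert v D) + (r + 1) ≤ potential r G σ D := by
  have hL : (totalDist G (σ * Equiv.swap v w) : ℤ) ≤ totalDist G σ := by
    exact_mod_cast totalDist_mul_swap_le_of_fArc h hw
  have hrL := mul_le_mul_of_nonneg_left hL (by positivity : (0 : ℤ) ≤ 2 * r)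
  rw [potential, potential, card_insert_of_notMem (hD.notMem_of_fArc h hw)]
  push_cast
  linarith

lemma IsDisplaced.potential_mul_inv_add_le {c : Equiv.Perm V} (hD : IsDisplaced G σ D)
    (hc : c ≠ 1) (hr : #c.support ≤ r + 1) (harc : ∀ v ∈ c.support, FArc G σ v (c v)) :
    potential r G (σ * c⁻¹) (D \ c.support) + (r + 1) * (#c.support - 1) ≤
      potential r G σ D := by
  have hL : (totalDist G (σ * c⁻¹) + #c.support : ℤ) ≤ totalDist G σ := by
    exact_mod_cast totalDist_mul_inv_add_card_support_le harc
  have hcard : (#D + 1 : ℤ) ≤ #(D \ c.support) + #c.support := by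
    exact_mod_cast hD.card_lt_card_sdiff_support_add hc harc
  have hrL := mul_le_mul_of_nonneg_left hL (by positivity : (0 : ℤ) ≤ 2 * r)
  have hrcard := mul_le_mul_of_nonneg_left hcard (by positivity : (0 : ℤ) ≤ r + 1)
  rw [potential, potential]
  linarith

end Potential

section HappyChain

variable {τ : ℕ → Equiv.Perm V} {e : ℕ → V × V} {j m r : ℕ}

lemma HappyChainAt.exists_isCycle (h : HappyChainAt G τ e j m) (hm : 2 < m) :
    ∃ (u : V) (p : G.Walk u u), p.IsCycle ∧ p.length = m := by
  obtain ⟨-, v, hinj, harc, -⟩ := h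
  have hsucc {a b : Fin m} (hab : (b - a).val = 1) : G.Adj (v a) (v b) := by
    have hb : (b : ℕ) = (a + 1) % m := by
      have : NeZero m := ⟨by omega⟩
      rw [← hab, ← Fin.val_add, add_sub_cancel]
    exact hb ▸ (harc a a.isLt).1
  refine (SimpleGraph.cycleGraph_isContained_iff hm).mp
    ⟨⟨fun i => v i, fun {a b} hab => ?_⟩, fun a b hab => Fin.ext (hinj a a.2 b b.2 hab)⟩
  rcases SimpleGraph.cycleGraph_adj'.mp hab with hba | hab
  · exact (hsucc hba).symm
  · exact hsucc hab

lemma HappyChainAt.length_le (h : HappyChainAt G τ e j m) (hr : 1 ≤ r)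
    (hcycle : ∀ (u : V) (p : G.Walk u u), p.IsCycle → p.length ≤ r + 1) : m ≤ r + 1 := by
  rcases h.1.eq_or_lt with rfl | hm
  · omega
  · obtain ⟨u, p, hp, rfl⟩ := h.exists_isCycle hm
    exact hcycle u p hp

lemma eq_mul_inv_formPerm_of_swaps [DecidableEq V] {v : ℕ → V}
    (hτ : ∀ i < m, τ (j + i + 1) = τ (j + i) * Equiv.swap (v (m - 1 - i)) (v (m - i))) :
    τ (j + m) = τ j * ((List.range (m + 1)).map v).formPerm⁻¹ := by
  suffices hpart : ∀ k ≤ m, τ (j + k) =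
      τ j * ((List.range' (m - k) (k + 1)).map v).formPerm⁻¹ by
    simpa [List.range_eq_range'] using hpart m le_rfl
  intro k hk
  induction k with
  | zero => simp
  | succ k ih =>
    have hstart : m - (k + 1) + 1 = m - k := by omega
    have hpred : m - 1 - k = m - (k + 1) := by omega
    rw [← add_assoc, hτ k hk, ih (by omega), List.range'_succ (n := k + 1), hstart,
      List.range'_succ (n := k), List.map_cons, List.map_cons, List.map_cons,
      List.formPerm_cons_cons, mul_inv_rev, Equiv.swap_inv, hpred, mul_assoc]

lemma HappyChainAt.exists_perm [Fintype V] [DecidableEq V] (h : HappyChainAt G τ e j m)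
    (hτ : ∀ i < m - 1,
      τ (j + i + 1) = τ (j + i) * Equiv.swap (e (j + i)).1 (e (j + i)).2) :
    ∃ c : Equiv.Perm V, #c.support = m ∧ (∀ v ∈ c.support, FArc G (τ j) v (c v)) ∧
      τ (j + (m - 1)) = τ j * c⁻¹ := by
  obtain ⟨hm, v, hinj, harc, he⟩ := h
  set l := (List.range m).map v with hl
  have hlen : l.length = m := by simp [hl]
  have hnodup : l.Nodup := List.nodup_range.map_on fun a ha b hb =>
    hinj a (List.mem_range.mp ha) b (List.mem_range.mp hb)
  have hsupp : l.formPerm.support = l.toFinset :=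
    List.support_formPerm_of_nodup l hnodup fun x hx => by simp [hx] at hlen; omega
  refine ⟨l.formPerm, by rw [hsupp, List.toFinset_card_of_nodup hnodup, hlen], ?_, ?_⟩
  · intro x hx
    rw [hsupp, List.mem_toFinset] at hx
    obtain ⟨i, hi, rfl⟩ := List.getElem_of_mem hx
    rw [List.formPerm_apply_getElem l hnodup]
    simpa [hl] using harc i (hlen ▸ hi)
  · have hsub : m - 1 + 1 = m := by omega
    have hswaps : ∀ i < m - 1, τ (j + i + 1) =
        τ (j + i) * Equiv.swap (v (m - 1 - 1 - i)) (v (m - 1 - i)) := fun i hi => by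
      rw [hτ i hi, he i hi, Nat.sub_sub m 1 1]
    rw [eq_mul_inv_formPerm_of_swaps hswaps, hsub]

end HappyChain

section Blocks

variable [Fintype V] [DecidableEq V] {N B r : ℕ} {e : ℕ → V × V} {τ : ℕ → Equiv.Perm V}
  {c : ℕ → ℕ}

lemma mul_sub_le_potential_of_blocks (hr : 1 ≤ r)
    (hcycle : ∀ (u : V) (p : G.Walk u u), p.IsCycle → p.length ≤ r + 1)
    (hτ : ∀ j < N, τ (j + 1) = τ j * Equiv.swap (e j).1 (e j).2) (hτN : τ N = 1) (hcB : c B = N)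
    (hblocks : ∀ i < B, (c (i + 1) = c i + 1 ∧ UnhappyAt G τ e (c i)) ∨
      ∃ m, HappyChainAt G τ e (c i) m ∧ c (i + 1) = c i + (m - 1))
    {i : ℕ} (hi : i ≤ B) :
    c i ≤ N ∧ ∀ D, IsDisplaced G (τ (c i)) D →
      ((r + 1) * (N - c i) : ℤ) ≤ potential r G (τ (c i)) D := by
  induction hi using Nat.decreasingInduction with
  | self =>
    refine ⟨hcB.le, fun D hD => ?_⟩
    have hD0 : D = ∅ := eq_empty_of_forall_notMem fun v hv => hD.apply_ne hv (by simp [hcB, hτN])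
    simp [hD0, hcB, hτN, potential, totalDist_one]
  | of_succ i hi ih =>
    obtain ⟨hciN, ih⟩ := ih
    rcases hblocks i hi with ⟨hci, harc, hsolved⟩ | ⟨m, hchain, hci⟩ <;> rw [hci] at hciN ih
    · refine ⟨by omega, fun D hD => ?_⟩
      rw [hτ _ hciN] at ih
      have hrest := ih _ (hD.insert_mul_swap harc hsolved)
      have hstep := hD.potential_mul_swap_add_le (r := r) harc hsolved
      push_cast at hrest
      linarith
    · have hm := hchain.1
      refine ⟨by omega, fun D hD => ?_⟩
      obtain ⟨ρ, rfl, harc, hτρ⟩ := hchain.exists_perm fun k hk => hτ (c i + k) (by omega)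
      have hρ : ρ ≠ 1 := fun h => by simp [h] at hm
      rw [hτρ] at ih
      have hrest := ih _ hD.sdiff_support
      have hstep := hD.potential_mul_inv_add_le hρ (hchain.length_le hr hcycle) harc
      push_cast [Nat.cast_sub (one_le_two.trans hm)] at hrest
      linarith

end Blocks

end TokenSwap

theorem token_swapping_happy_unhappy_algorithm_two_approximation_on_trees_general
    {V : Type*} [Fintype V] [DecidableEq V]
    (G : SimpleGraph V) (r : ℕ) (hr : 1 ≤ r)
    (hcycle : ∀ (u : V) (p : G.Walk u u), p.IsCycle → p.length ≤ r + 1)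
    (σ : Equiv.Perm V) (N : ℕ) (e : ℕ → V × V) (τ : ℕ → Equiv.Perm V)
    (hτ0 : τ 0 = σ)
    (hτ : ∀ j < N, τ (j + 1) = τ j * Equiv.swap (e j).1 (e j).2)
    (hτN : τ N = 1)
    (B : ℕ) (c : ℕ → ℕ) (hc0 : c 0 = 0) (hcB : c B = N)
    (hblocks : ∀ i < B,
      (c (i + 1) = c i + 1 ∧ TokenSwap.UnhappyAt G τ e (c i)) ∨
      (∃ m, TokenSwap.HappyChainAt G τ e (c i) m ∧ c (i + 1) = c i + (m - 1))) :
    (r + 1) * N ≤ 2 * r * ∑ x, G.dist x (σ x) ∧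
    ∀ (k : ℕ) (l : List (V × V)), l.length = k → (∀ p ∈ l, G.Adj p.1 p.2) →
      σ = (l.map fun p => Equiv.swap p.1 p.2).prod → (r + 1) * N ≤ 4 * r * k := by
  have hN : (r + 1) * N ≤ 2 * r * TokenSwap.totalDist G σ := by
    have h := (TokenSwap.mul_sub_le_potential_of_blocks hr hcycle hτ hτN hcB hblocks
      (Nat.zero_le B)).2 ∅ TokenSwap.isDisplaced_empty
    simp only [hc0, hτ0, TokenSwap.potential, card_empty, Nat.cast_zero, mul_zero,
      sub_zero] at h
    exact_mod_cast h
  refine ⟨hN, ?_⟩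
  rintro k l rfl hl rfl
  calc (r + 1) * N ≤ 2 * r * TokenSwap.totalDist G (l.map fun p => Equiv.swap p.1 p.2).prod := hN
    _ ≤ 2 * r * (2 * l.length) := Nat.mul_le_mul_left _ (TokenSwap.totalDist_prod_swap_le l hl)
    _ = 4 * r * l.length := by ring

/-- **Theorem 3.4, trees.** Let `σ` be a configuration on a finite tree `G`
(a finite connected acyclic simple graph) and suppose a sequence of `N` swaps along edges
`e 0, …, e (N-1)`, with intermediate configurations `τ 0 = σ, τ 1, …, τ N`, decomposing
into consecutive blocks (with starting indices `c 0 = 0 < c 1 < … < c B = N`), each block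
a happy swap chain or an unhappy swap with respect to the configuration current at the
start of the block, transforms `σ` into the identity.  Then the total number `N` of swaps
performed is at most `L(σ)` where `L(σ) = Σ_{x ∈ V} dist_G(x, σ x)`; in particular, it is
at most `2` times the minimum number of swaps along edges of `G` needed to sort `σ`. -/
theorem token_swapping_happy_unhappy_algorithm_two_approximation_on_trees
    {V : Type*} [Fintype V] [DecidableEq V]
    (G : SimpleGraph V) (hT : G.IsTree)
    (σ : Equiv.Perm V) (N : ℕ) (e : ℕ → V × V) (τ : ℕ → Equiv.Perm V)
    (hτ0 : τ 0 = σ)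
    (hτ : ∀ j < N, τ (j + 1) = τ j * Equiv.swap (e j).1 (e j).2)
    (hτN : τ N = 1)
    (B : ℕ) (c : ℕ → ℕ) (hc0 : c 0 = 0) (hcB : c B = N)
    (hblocks : ∀ i < B,
      (c (i + 1) = c i + 1 ∧ TokenSwap.UnhappyAt G τ e (c i)) ∨
      (∃ m, TokenSwap.HappyChainAt G τ e (c i) m ∧ c (i + 1) = c i + (m - 1))) :
    N ≤ ∑ x, G.dist x (σ x) ∧
    ∀ (k : ℕ) (l : List (V × V)), l.length = k → (∀ p ∈ l, G.Adj p.1 p.2) →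
      σ = (l.map fun p => Equiv.swap p.1 p.2).prod → N ≤ 2 * k := by
  have h := token_swapping_happy_unhappy_algorithm_two_approximation_on_trees_general G 1 le_rfl
    (fun _ p hp => absurd hp (hT.isAcyclic p)) σ N e τ hτ0 hτ hτN B c hc0 hcB hblocks
  exact ⟨by linarith [h.1], fun k l hk hl hσ => by linarith [h.2 k l hk hl hσ]⟩
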